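/- The normalized matrix of maximum out-forests is the limit of the resolvent-type matrices: J̃ = lim_{τ→∞} (I + τL)^{−1}, where for every τ > 0 the matrix I + τL is invertible. -/

import Mathlib

/-!
The parametric matrix-forest theorem `Q(τ) (I + τL) = σ(τ) I` carries the proof. Since `σ(τ) ≥ 1`
(the empty forest has weight `1`), it makes `I + τL` invertible with inverse `σ(τ)⁻¹ Q(τ)`, and
the entries of this inverse are quotients of two polynomials of formal degree `n - d'` in `τ`
whose leading coefficients are `(Q_{n-d'})_{ij}` and `σ_{n-d'} > 0`.

Replacing `W` by `τW` multiplies the weight of a forest with `k` arcs by `τ ^ k`, so the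
matrix-forest theorem is only needed for `τ = 1` (`forest_identity`). To prove the `(i, j)` entry
of the identity, group the out-forests by what remains after the arc entering `j` is deleted: a
forest `F` in which `j` is a root, with tree `T`. The members of the group are `F` itself and `F`
with an added arc `(l, j)`, where `l ∉ T` (`sum_forests`). In the forest with the added arc the
vertices of `T` acquire the root of `l`, and all other vertices keep their roots
(`inTreeOf_insert_of_reach`, `inTreeOf_insert_of_not_reach`). Put `A = ∑_{l ∉ T} w_lj`,
`B = ∑_{l ∈ T} w_lj`, `C = ∑_{l ∉ T, root l = i} w_lj` and `δ = δ_ij`; then, up to the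
factor `w(F)`, the contribution of the group to the entry is the trivial identity
`(δ + C)(1 + A + B) = δ(1 + A) + (C + Bδ) + (BC + CA)`.
-/

open Matrix Finset

namespace ForestMatrix

variable {n : ℕ}

/-- Reachability from `i` to `j` within a finite set `F` of arcs. -/
def FReach (F : Finset (Fin n × Fin n)) (i j : Fin n) : Prop :=
  Relation.ReflTransGen (fun a b => (a, b) ∈ F) i j

/-- `F` is (the arc set of) a spanning diverging forest (out-forest) of the digraph whose
positive arc weights are recorded in `W`: all arcs of `F` are arcs of the digraph, every
vertex has indegree at most one, and there are no directed cycles. -/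
def IsOutForest (W : Matrix (Fin n) (Fin n) ℝ) (F : Finset (Fin n × Fin n)) : Prop :=
  (∀ e ∈ F, 0 < W e.1 e.2) ∧
  (∀ v : Fin n, ({e ∈ F | e.2 = v} : Finset (Fin n × Fin n)).card ≤ 1) ∧
  (∀ v : Fin n, ¬ Relation.TransGen (fun a b => (a, b) ∈ F) v v)

/-- The weight of a (sub)digraph: the product of its arc weights. -/
noncomputable def wt (W : Matrix (Fin n) (Fin n) ℝ) (F : Finset (Fin n × Fin n)) : ℝ :=
  ∏ e ∈ F, W e.1 e.2

/-- The weight of a set of digraphs: the sum of their weights. -/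
noncomputable def wtSet (W : Matrix (Fin n) (Fin n) ℝ)
    (G : Finset (Finset (Fin n × Fin n))) : ℝ :=
  ∑ F ∈ G, wt W F

open scoped Classical in
/-- The set of all out-forests of the digraph with weight matrix `W`. -/
noncomputable def allOutForests (W : Matrix (Fin n) (Fin n) ℝ) :
    Finset (Finset (Fin n × Fin n)) :=
  Finset.univ.filter (fun F => IsOutForest W F)

open scoped Classical in
/-- The set of all out-forests with `k` arcs. -/
noncomputable def outForests (W : Matrix (Fin n) (Fin n) ℝ) (k : ℕ) :
    Finset (Finset (Fin n × Fin n)) :=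
  Finset.univ.filter (fun F => IsOutForest W F ∧ F.card = k)

/-- The number of arcs of a maximum out-forest; it equals `n - d'` where `d'` is the
out-forest dimension. -/
noncomputable def maxArcs (W : Matrix (Fin n) (Fin n) ℝ) : ℕ :=
  (allOutForests W).sup Finset.card

/-- `σ_k`: the total weight of the out-forests with `k` arcs. -/
noncomputable def sigma (W : Matrix (Fin n) (Fin n) ℝ) (k : ℕ) : ℝ :=
  wtSet W (outForests W k)

/-- `j` belongs to the tree of the forest `F` diverging from `i`:
`i` is a root of `F` and `j` is reachable from `i` in `F`. -/
def inTreeOf (F : Finset (Fin n × Fin n)) (i j : Fin n) : Prop :=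
  (∀ e ∈ F, e.2 ≠ i) ∧ FReach F i j

open scoped Classical in
/-- `Q_k`: the matrix of out-forests with `k` arcs; its `(i,j)` entry is the total weight of
the out-forests with `k` arcs in which `j` belongs to a tree diverging from `i`. -/
noncomputable def Qmat (W : Matrix (Fin n) (Fin n) ℝ) (k : ℕ) :
    Matrix (Fin n) (Fin n) ℝ :=
  fun i j => wtSet W ((outForests W k).filter (fun F => inTreeOf F i j))

/-- The column Laplacian matrix of the digraph with weight matrix `W`. -/
noncomputable def Lap (W : Matrix (Fin n) (Fin n) ℝ) : Matrix (Fin n) (Fin n) ℝ :=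
  fun i j => if i = j then ∑ k ∈ Finset.univ.erase i, W k i else -W i j

/-- `σ(τ) = Σ_{k=0}^{n-d'} σ_k τ^k`. -/
noncomputable def sigmaTau (W : Matrix (Fin n) (Fin n) ℝ) (τ : ℝ) : ℝ :=
  ∑ k ∈ Finset.range (maxArcs W + 1), sigma W k * τ ^ k

/-- `Q(τ) = Σ_{k=0}^{n-d'} Q_k τ^k`. -/
noncomputable def QTau (W : Matrix (Fin n) (Fin n) ℝ) (τ : ℝ) :
    Matrix (Fin n) (Fin n) ℝ :=
  ∑ k ∈ Finset.range (maxArcs W + 1), τ ^ k • Qmat W k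

/-- `J(τ) = σ(τ)⁻¹ Q(τ)`. -/
noncomputable def JTau (W : Matrix (Fin n) (Fin n) ℝ) (τ : ℝ) :
    Matrix (Fin n) (Fin n) ℝ :=
  (sigmaTau W τ)⁻¹ • QTau W τ

/-- `J̃ = σ_{n-d'}⁻¹ Q_{n-d'}`: the normalized matrix of maximum out-forests. -/
noncomputable def Jtil (W : Matrix (Fin n) (Fin n) ℝ) : Matrix (Fin n) (Fin n) ℝ :=
  (sigma W (maxArcs W))⁻¹ • Qmat W (maxArcs W)

/-- Reachability in the digraph with weight matrix `W`. -/
def Reach (W : Matrix (Fin n) (Fin n) ℝ) (i j : Fin n) : Prop :=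
  Relation.ReflTransGen (fun a b => 0 < W a b) i j

/-- `K` is a source knot of the digraph: `K` is the vertex set of a bicomponent
(a maximal strongly connected subgraph) and no arc enters `K` from outside. -/
def IsSourceKnot (W : Matrix (Fin n) (Fin n) ℝ) (K : Finset (Fin n)) : Prop :=
  (∃ i, ∀ j, j ∈ K ↔ (Reach W i j ∧ Reach W j i)) ∧
  (∀ j k, k ∈ K → 0 < W j k → j ∈ K)

/-! ### The matrix-forest identity at `τ = 1` -/

section Combinatorics

variable {W : Matrix (Fin n) (Fin n) ℝ} {F G : Finset (Fin n × Fin n)} {i j k l : Fin n}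

/-- A path ending in a root is trivial. -/
lemma FReach.eq_of_root (hj : ∀ e ∈ F, e.2 ≠ j) (h : FReach F i j) : i = j := by
  rcases Relation.ReflTransGen.cases_tail h with h | ⟨c, -, hc⟩
  · exact h.symm
  · exact absurd rfl (hj _ hc)

lemma inTreeOf_root (hj : ∀ e ∈ F, e.2 ≠ j) : inTreeOf F i j ↔ i = j := by
  constructor
  · exact fun h => FReach.eq_of_root hj h.2
  · rintro rfl
    exact ⟨hj, Relation.ReflTransGen.refl⟩

/-- In an out-forest a vertex belongs to the tree of only one root, because indegrees are at
most one. -/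
lemma inTreeOf_of_reach (hF : IsOutForest W F) (hj : ∀ e ∈ F, e.2 ≠ j) (hk : FReach F j k) :
    inTreeOf F i k ↔ i = j := by
  constructor
  · rintro ⟨hi, hik⟩
    have hU : Relator.RightUnique (Function.swap fun a b => (a, b) ∈ F) := by
      intro a b c hb hc
      have := Finset.card_le_one.1 (hF.2.1 a) (b, a) (by simpa using hb) (c, a) (by simpa using hc)
      exact congrArg Prod.fst this
    rcases Relation.ReflTransGen.total_of_right_unique hU
      (Relation.reflTransGen_swap.2 hik) (Relation.reflTransGen_swap.2 hk) with h | h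
    · exact (FReach.eq_of_root hi (Relation.reflTransGen_swap.1 h)).symm
    · exact FReach.eq_of_root hj (Relation.reflTransGen_swap.1 h)
  · rintro rfl
    exact ⟨hj, hk⟩

lemma FReach.mono (h : F ⊆ G) (hr : FReach F i j) : FReach G i j :=
  Relation.ReflTransGen.mono (fun _ _ hab => h hab) _ _ hr

/-- A path in `F + (l, j)` either avoids the new arc or splits at its last use. -/
lemma freach_insert (x y : Fin n) :
    FReach (insert (l, j) F) x y ↔ FReach F x y ∨ (FReach F x l ∧ FReach F j y) := by
  constructor
  · intro h
    induction h with
    | refl => exact Or.inl Relation.ReflTransGen.refl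
    | tail _ hbc ih =>
      rcases Finset.mem_insert.1 hbc with h | h
      · obtain ⟨rfl, rfl⟩ := Prod.mk.inj h
        exact Or.inr ⟨ih.elim id (·.1), Relation.ReflTransGen.refl⟩
      · exact ih.imp (fun h' => h'.tail h) (fun h' => ⟨h'.1, h'.2.tail h⟩)
  · rintro (h | ⟨h1, h2⟩)
    · exact h.mono (Finset.subset_insert _ _)
    · exact ((h1.mono (Finset.subset_insert _ _)).tail (Finset.mem_insert_self _ _)).trans
        (h2.mono (Finset.subset_insert _ _))

lemma root_insert :
    (∀ e ∈ insert (l, j) F, e.2 ≠ i) ↔ j ≠ i ∧ ∀ e ∈ F, e.2 ≠ i := by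
  simp only [Finset.forall_mem_insert]

/-- After adding the arc `(l, j)`, vertices of the tree of `j` have the root of `l`. -/
lemma inTreeOf_insert_of_reach (hF : IsOutForest W F) (hj : ∀ e ∈ F, e.2 ≠ j)
    (hl : ¬ FReach F j l) (hk : FReach F j k) :
    inTreeOf (insert (l, j) F) i k ↔ inTreeOf F i l := by
  unfold inTreeOf
  rw [root_insert, freach_insert]
  constructor
  · rintro ⟨⟨hji, hi⟩, h | h⟩
    · exact absurd ((inTreeOf_of_reach hF hj hk).1 ⟨hi, h⟩).symm hji
    · exact ⟨hi, h.1⟩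
  · rintro ⟨hi, h⟩
    refine ⟨⟨?_, hi⟩, Or.inr ⟨h, hk⟩⟩
    rintro rfl
    exact hl h

/-- After adding the arc `(l, j)`, vertices outside the tree of `j` keep their root. -/
lemma inTreeOf_insert_of_not_reach (hk : ¬ FReach F j k) :
    inTreeOf (insert (l, j) F) i k ↔ inTreeOf F i k := by
  unfold inTreeOf
  rw [root_insert, freach_insert]
  constructor
  · rintro ⟨⟨-, hi⟩, h | h⟩
    · exact ⟨hi, h⟩
    · exact absurd h.2 hk
  · rintro ⟨hi, h⟩
    refine ⟨⟨?_, hi⟩, Or.inl h⟩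
    rintro rfl
    exact hk h

lemma IsOutForest.subset (hG : IsOutForest W G) (h : F ⊆ G) : IsOutForest W F :=
  ⟨fun e he => hG.1 e (h he),
    fun v => (Finset.card_le_card (Finset.filter_subset_filter _ h)).trans (hG.2.1 v),
    fun v hv => hG.2.2 v (Relation.TransGen.mono (fun _ _ hab => h hab) _ _ hv)⟩

lemma IsOutForest.insert (hF : IsOutForest W F) (hj : ∀ e ∈ F, e.2 ≠ j)
    (hl : ¬ FReach F j l) (hw : 0 < W l j) : IsOutForest W (insert (l, j) F) := by
  refine ⟨Finset.forall_mem_insert _ _ _ |>.2 ⟨hw, hF.1⟩, fun v => ?_, fun v hv => ?_⟩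
  · rw [Finset.filter_insert]
    split_ifs with h
    · have : F.filter (fun e => e.2 = v) = ∅ := by
        rw [Finset.filter_eq_empty_iff]
        intro e he h'
        exact hj e he (h'.trans h.symm)
      simp [this]
    · exact hF.2.1 v
  · -- A cycle through the new arc would close up a path from `j` to `l` in `F`.
    have key : ∀ x y, Relation.TransGen (fun a b => (a, b) ∈ Insert.insert (l, j) F) x y →
        Relation.TransGen (fun a b => (a, b) ∈ F) x y ∨ (FReach F x l ∧ FReach F j y) := by
      intro x y h
      obtain ⟨c, hc, hcy⟩ := Relation.TransGen.tail'_iff.1 h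
      have hc' := (freach_insert x c).1 hc
      rcases Finset.mem_insert.1 hcy with h' | h'
      · obtain ⟨rfl, rfl⟩ := Prod.mk.inj h'
        exact Or.inr ⟨hc'.elim id (·.1), Relation.ReflTransGen.refl⟩
      · exact hc'.imp (fun h => Relation.TransGen.tail' h h') (fun h => ⟨h.1, h.2.tail h'⟩)
    rcases key v v hv with h | h
    · exact hF.2.2 v h
    · exact hl (h.2.trans h.1)

lemma isOutForest_empty : IsOutForest W ∅ := by
  refine ⟨by simp, by simp, fun v hv => ?_⟩
  obtain ⟨c, -, hc⟩ := Relation.TransGen.tail'_iff.1 hv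
  simp at hc

lemma mem_allOutForests : F ∈ allOutForests W ↔ IsOutForest W F := by
  simp [allOutForests]

lemma wt_pos (hF : IsOutForest W F) : 0 < wt W F :=
  Finset.prod_pos hF.1

open scoped Classical in
/-- Summation over out-forests by grouping those that agree off the arc entering `j`. -/
lemma sum_forests (hW0 : ∀ i j, 0 ≤ W i j) (j : Fin n) (g : Finset (Fin n × Fin n) → ℝ) :
    ∑ F ∈ allOutForests W, wt W F * g F =
      ∑ F ∈ (allOutForests W).filter (fun F => ∀ e ∈ F, e.2 ≠ j),
        wt W F * (g F + ∑ l ∈ Finset.univ.filter (fun l => ¬ FReach F j l),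
          W l j * g (insert (l, j) F)) := by
  rw [← Finset.sum_filter_add_sum_filter_not (allOutForests W) (fun F => ∀ e ∈ F, e.2 ≠ j)]
  simp_rw [mul_add, Finset.sum_add_distrib]
  congr 1
  -- Arcs of zero weight are not arcs of the digraph, but their terms vanish.
  have h1 : ∀ F ∈ (allOutForests W).filter (fun F => ∀ e ∈ F, e.2 ≠ j),
      wt W F * ∑ l ∈ Finset.univ.filter (fun l => ¬ FReach F j l), W l j * g (insert (l, j) F) =
      ∑ l ∈ Finset.univ.filter (fun l => ¬ FReach F j l ∧ 0 < W l j),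
        wt W F * (W l j * g (insert (l, j) F)) := by
    intro F _
    rw [Finset.mul_sum, ← Finset.filter_filter]
    symm
    apply Finset.sum_filter_of_ne
    intro l _ h
    refine (hW0 l j).lt_of_ne fun h0 => h ?_
    simp [← h0]
  rw [Finset.sum_congr rfl h1, Finset.sum_sigma']
  symm
  refine Finset.sum_bij (fun p _ => insert (p.2, j) p.1) ?_ ?_ ?_ ?_
  · rintro ⟨F, l⟩ h
    simp only [Finset.mem_sigma, Finset.mem_filter, mem_allOutForests, Finset.mem_univ,
      true_and] at h ⊢
    refine ⟨h.1.1.insert h.1.2 h.2.1 h.2.2, fun h' => ?_⟩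
    exact h' (l, j) (Finset.mem_insert_self _ _) rfl
  · rintro ⟨F, l⟩ h ⟨F', l'⟩ h' heq
    simp only [Finset.mem_sigma, Finset.mem_filter, mem_allOutForests, Finset.mem_univ,
      true_and] at h h' heq
    have hl : l = l' := by
      have : (l, j) ∈ insert (l', j) F' := heq ▸ Finset.mem_insert_self _ _
      rcases Finset.mem_insert.1 this with h0 | h0
      · exact congrArg Prod.fst h0
      · exact absurd rfl (h'.1.2 _ h0)
    subst hl
    have hF : F = F' := by
      rw [← Finset.erase_insert (fun h0 => h.1.2 (l, j) h0 rfl), heq,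
        Finset.erase_insert (fun h0 => h'.1.2 (l, j) h0 rfl)]
    subst hF
    rfl
  · intro G hG
    simp only [Finset.mem_filter, mem_allOutForests, not_forall, not_not] at hG
    obtain ⟨hG, ⟨l, j'⟩, hmem, rfl⟩ := hG
    have hsub : G.erase (l, j') ⊆ G := Finset.erase_subset _ _
    refine ⟨⟨G.erase (l, j'), l⟩, ?_, Finset.insert_erase hmem⟩
    simp only [Finset.mem_sigma, Finset.mem_filter, mem_allOutForests, Finset.mem_univ,
      true_and]
    refine ⟨⟨hG.subset hsub, fun e he h => ?_⟩, fun h => ?_, hG.1 _ hmem⟩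
    · have := Finset.card_le_one.1 (hG.2.1 j') e (by simpa using ⟨hsub he, h⟩) (l, j')
        (by simpa using hmem)
      exact (Finset.mem_erase.1 he).1 this
    · exact hG.2.2 l (Relation.TransGen.head' hmem (h.mono hsub))
  · rintro ⟨F, l⟩ h
    simp only [Finset.mem_sigma, Finset.mem_filter, mem_allOutForests, Finset.mem_univ,
      true_and] at h
    have : wt W (insert (l, j) F) = W l j * wt W F :=
      Finset.prod_insert (fun h0 => h.1.2 (l, j) h0 rfl)
    rw [this]
    ring

open scoped Classical in
/-- The indicator matrix of a forest: entry `(i, k)` is `1` if `k` is in the tree of the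
root `i`, and `0` otherwise. -/
noncomputable def ind (F : Finset (Fin n × Fin n)) (i k : Fin n) : ℝ :=
  if inTreeOf F i k then 1 else 0

open scoped Classical in
/-- The `(i, j)` entry of the matrix-forest identity `Q (I + L) = σ I`, with the negative terms
moved to the right-hand side. -/
lemma forest_identity (hW0 : ∀ i j, 0 ≤ W i j) (i j : Fin n) :
    (∑ F ∈ allOutForests W, wt W F * ind F i j) * (1 + ∑ k, W k j) =
      (∑ k, (∑ F ∈ allOutForests W, wt W F * ind F i k) * W k j) +
      (∑ F ∈ allOutForests W, wt W F) * (if i = j then 1 else 0) := by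
  have e1 : ∑ k, (∑ F ∈ allOutForests W, wt W F * ind F i k) * W k j =
      ∑ F ∈ allOutForests W, wt W F * ∑ k, ind F i k * W k j := by
    simp_rw [Finset.sum_mul, Finset.mul_sum]
    rw [Finset.sum_comm]
    simp_rw [mul_assoc]
  have e2 : ∑ F ∈ allOutForests W, wt W F = ∑ F ∈ allOutForests W, wt W F * 1 := by simp
  rw [e1, e2, sum_forests hW0 j, sum_forests hW0 j, sum_forests hW0 j, Finset.sum_mul,
    Finset.sum_mul, ← Finset.sum_add_distrib]
  refine Finset.sum_congr rfl fun F hF => ?_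
  simp only [Finset.mem_filter, mem_allOutForests] at hF
  obtain ⟨hF, hj⟩ := hF
  set δ : ℝ := if i = j then 1 else 0 with hδ
  set T := Finset.univ.filter (fun l => FReach F j l) with hT
  set S := Finset.univ.filter (fun l => ¬ FReach F j l) with hS
  have split : ∀ f : Fin n → ℝ, ∑ k, f k = ∑ k ∈ T, f k + ∑ k ∈ S, f k := fun f =>
    (Finset.sum_filter_add_sum_filter_not _ _ _).symm
  have hjj : FReach F j j := Relation.ReflTransGen.refl
  have hT' : ∀ k ∈ T, ind F i k = δ := fun k hk => by
    have hk := (Finset.mem_filter.1 hk).2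
    simp only [ind, inTreeOf_of_reach hF hj hk, hδ]
  have hTi : ∀ l ∈ S, ∀ k ∈ T, ind (insert (l, j) F) i k = ind F i l := fun l hl k hk => by
    have hk := (Finset.mem_filter.1 hk).2
    have hl := (Finset.mem_filter.1 hl).2
    simp only [ind, inTreeOf_insert_of_reach hF hj hl hk]
  have hSi : ∀ l, ∀ k ∈ S, ind (insert (l, j) F) i k = ind F i k := fun l k hk => by
    have hk := (Finset.mem_filter.1 hk).2
    simp only [ind, inTreeOf_insert_of_not_reach hk]
  have hjT : j ∈ T := by simpa [hT] using hjj
  set A := ∑ l ∈ S, W l j with hA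
  set B := ∑ l ∈ T, W l j with hB
  set C := ∑ l ∈ S, W l j * ind F i l with hC
  have c1 : ∑ l ∈ S, W l j * ind (insert (l, j) F) i j = C :=
    Finset.sum_congr rfl fun l hl => by rw [hTi l hl j hjT]
  have c2 : ∑ k, ind F i k * W k j = B * δ + C := by
    rw [split, hB, hC, Finset.sum_mul]
    congr 1
    · exact Finset.sum_congr rfl fun k hk => by rw [hT' k hk, mul_comm]
    · exact Finset.sum_congr rfl fun k hk => mul_comm _ _
  have c3 : ∀ l ∈ S, ∑ k, ind (insert (l, j) F) i k * W k j = B * ind F i l + C := by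
    intro l hl
    rw [split, hB, hC, Finset.sum_mul]
    congr 1
    · exact Finset.sum_congr rfl fun k hk => by rw [hTi l hl k hk, mul_comm]
    · exact Finset.sum_congr rfl fun k hk => by rw [hSi l k hk, mul_comm]
  have c4 : ∑ l ∈ S, W l j * ∑ k, ind (insert (l, j) F) i k * W k j = B * C + A * C := by
    have h : ∀ l ∈ S, W l j * ∑ k, ind (insert (l, j) F) i k * W k j =
        B * (W l j * ind F i l) + W l j * C := fun l hl => by rw [c3 l hl]; ring
    rw [Finset.sum_congr rfl h, Finset.sum_add_distrib, ← Finset.mul_sum, ← Finset.sum_mul]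
  have c5 : ∑ l ∈ S, W l j * 1 = A := by simp [hA]
  rw [c1, c4, c2, c5, hT' j hjT, split]
  ring

end Combinatorics

/-! ### Scaling the weights by `τ` -/

section Scaling

variable (W : Matrix (Fin n) (Fin n) ℝ)

lemma allOutForests_smul {τ : ℝ} (hτ : 0 < τ) : allOutForests (τ • W) = allOutForests W := by
  ext F
  simp only [mem_allOutForests, IsOutForest, Matrix.smul_apply, smul_eq_mul,
    mul_pos_iff_of_pos_left hτ]

lemma wt_smul (τ : ℝ) (F : Finset (Fin n × Fin n)) : wt (τ • W) F = wt W F * τ ^ F.card := by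
  simp [wt, Finset.prod_mul_distrib, mul_comm]

/-- Sums over all out-forests split according to the number of arcs. -/
lemma sum_by_card (f : Finset (Fin n × Fin n) → ℝ) :
    ∑ k ∈ Finset.range (maxArcs W + 1), ∑ F ∈ outForests W k, f F =
      ∑ F ∈ allOutForests W, f F := by
  classical
  rw [← Finset.sum_fiberwise_of_maps_to (s := allOutForests W) (g := Finset.card)
    (t := Finset.range (maxArcs W + 1))]
  · refine Finset.sum_congr rfl fun k _ => Finset.sum_congr ?_ fun _ _ => rfl
    ext F
    simp [outForests, mem_allOutForests]
  · intro F hF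
    exact Finset.mem_range_succ_iff.2 (Finset.le_sup (f := Finset.card) hF)

lemma card_of_mem_outForests {k : ℕ} {F : Finset (Fin n × Fin n)} (h : F ∈ outForests W k) :
    F.card = k := by
  simp only [outForests, Finset.mem_filter] at h
  exact h.2.2

lemma sigmaTau_eq {τ : ℝ} (hτ : 0 < τ) :
    sigmaTau W τ = ∑ F ∈ allOutForests (τ • W), wt (τ • W) F := by
  rw [allOutForests_smul W hτ, ← sum_by_card, sigmaTau]
  refine Finset.sum_congr rfl fun k _ => ?_
  rw [sigma, wtSet, Finset.sum_mul]
  exact Finset.sum_congr rfl fun F hF => by rw [wt_smul, card_of_mem_outForests W hF]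

lemma Qmat_apply (k : ℕ) (i j : Fin n) :
    Qmat W k i j = ∑ F ∈ outForests W k, wt W F * ind F i j := by
  classical
  simp only [Qmat, wtSet, Finset.sum_filter, ind, mul_ite, mul_one, mul_zero]

lemma QTau_apply' (τ : ℝ) (i j : Fin n) :
    QTau W τ i j = ∑ k ∈ Finset.range (maxArcs W + 1), Qmat W k i j * τ ^ k := by
  simp only [QTau, Matrix.sum_apply, Matrix.smul_apply, smul_eq_mul, mul_comm]

lemma QTau_apply {τ : ℝ} (hτ : 0 < τ) (i j : Fin n) :
    QTau W τ i j = ∑ F ∈ allOutForests (τ • W), wt (τ • W) F * ind F i j := by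
  rw [allOutForests_smul W hτ, ← sum_by_card, QTau_apply']
  refine Finset.sum_congr rfl fun k _ => ?_
  rw [Qmat_apply, Finset.sum_mul]
  exact Finset.sum_congr rfl fun F hF => by
    rw [wt_smul, card_of_mem_outForests W hF]; ring

lemma sigmaTau_pos {τ : ℝ} (hτ : 0 < τ) : 0 < sigmaTau W τ := by
  rw [sigmaTau_eq W hτ]
  exact Finset.sum_pos (fun F hF => wt_pos (mem_allOutForests.1 hF))
    ⟨∅, mem_allOutForests.2 isOutForest_empty⟩

lemma sigma_maxArcs_pos : 0 < sigma W (maxArcs W) := by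
  obtain ⟨F, hF, h⟩ := Finset.exists_mem_eq_sup (allOutForests W)
    ⟨∅, mem_allOutForests.2 isOutForest_empty⟩ Finset.card
  refine Finset.sum_pos (fun G hG => ?_) ⟨F, ?_⟩
  · simp only [outForests, Finset.mem_filter] at hG
    exact wt_pos hG.2.1
  · simp only [outForests, Finset.mem_filter, Finset.mem_univ, true_and]
    exact ⟨mem_allOutForests.1 hF, h.symm⟩

/-- The parametric matrix-forest theorem. -/
lemma QTau_mul (hW0 : ∀ i j, 0 ≤ W i j) (hWd : ∀ i, W i i = 0) {τ : ℝ} (hτ : 0 < τ) :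
    QTau W τ * (1 + τ • Lap W) = sigmaTau W τ • 1 := by
  ext i j
  have hL : ∀ k, (1 + τ • Lap W) k j =
      (if k = j then 1 + ∑ l, (τ • W) l j else 0) - (τ • W) k j := by
    intro k
    by_cases h : k = j
    · subst h
      simp only [Matrix.add_apply, Matrix.one_apply_eq, Matrix.smul_apply, Lap, if_true,
        smul_eq_mul, hWd, ← Finset.mul_sum]
      rw [Finset.sum_erase (f := fun l => W l k) _ (hWd k)]
      ring
    · simp [Lap, h]
  have key := forest_identity (W := τ • W)
    (fun i j => mul_nonneg hτ.le (hW0 i j)) i j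
  simp_rw [← QTau_apply W hτ, ← sigmaTau_eq W hτ] at key
  rw [Matrix.mul_apply]
  simp_rw [hL, mul_sub, Finset.sum_sub_distrib, mul_ite, mul_zero]
  rw [Finset.sum_ite_eq' Finset.univ j, if_pos (Finset.mem_univ j), key, Matrix.smul_apply,
    Matrix.one_apply, smul_eq_mul]
  ring

end Scaling

/-! ### The limit -/

lemma tendsto_poly_div_pow (a : ℕ → ℝ) (m : ℕ) :
    Filter.Tendsto (fun τ : ℝ => (∑ k ∈ Finset.range (m + 1), a k * τ ^ k) / τ ^ m)
      Filter.atTop (nhds (a m)) := by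
  have h1 : Filter.Tendsto (fun τ : ℝ => ∑ k ∈ Finset.range m, a k * (τ ^ k / τ ^ m) + a m)
      Filter.atTop (nhds (∑ k ∈ Finset.range m, a k * 0 + a m)) :=
    (tendsto_finsetSum _ fun k hk =>
      (tendsto_pow_div_pow_atTop_zero (Finset.mem_range.1 hk)).const_mul _).add_const _
  simp only [mul_zero, Finset.sum_const_zero, zero_add] at h1
  refine h1.congr' ?_
  filter_upwards [Filter.eventually_gt_atTop 0] with τ hτ
  have : τ ^ m ≠ 0 := (pow_pos hτ m).ne'
  rw [Finset.sum_range_succ, add_div, mul_div_cancel_right₀ _ this, Finset.sum_div]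
  simp_rw [mul_div_assoc]

/-- The normalized matrix of maximum out-forests is the limit of the
resolvent-type matrices: `J̃ = lim_{τ→∞} (I + τL)⁻¹`, where for every `τ > 0` the matrix
`I + τL` is invertible. -/
theorem Jtil_eq_limit_resolvent (n : ℕ) (hn : 1 < n)
    (W : Matrix (Fin n) (Fin n) ℝ)
    (hW0 : ∀ i j, 0 ≤ W i j) (hWd : ∀ i, W i i = 0) :
    (∀ τ : ℝ, 0 < τ → IsUnit (1 + τ • Lap W)) ∧
    Filter.Tendsto (fun τ : ℝ => (1 + τ • Lap W)⁻¹) Filter.atTop (nhds (Jtil W)) := by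
  have hinv : ∀ τ : ℝ, 0 < τ → JTau W τ * (1 + τ • Lap W) = 1 := fun τ hτ => by
    rw [JTau, Matrix.smul_mul, QTau_mul W hW0 hWd hτ, smul_smul,
      inv_mul_cancel₀ (sigmaTau_pos W hτ).ne', one_smul]
  refine ⟨fun τ hτ => IsUnit.of_mul_eq_one_right _ (hinv τ hτ), ?_⟩
  refine Filter.Tendsto.congr' (f₁ := JTau W) ?_ ?_
  · filter_upwards [Filter.eventually_gt_atTop 0] with τ hτ
    exact (Matrix.inv_eq_left_inv (hinv τ hτ)).symm
  refine tendsto_pi_nhds.2 fun i => tendsto_pi_nhds.2 fun j => ?_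
  have h := ((tendsto_poly_div_pow (sigma W) (maxArcs W)).inv₀ (sigma_maxArcs_pos W).ne').mul
    (tendsto_poly_div_pow (fun k => Qmat W k i j) (maxArcs W))
  refine Filter.Tendsto.congr' ?_ h
  filter_upwards [Filter.eventually_gt_atTop 0] with τ hτ
  have hp : τ ^ maxArcs W ≠ 0 := (pow_pos hτ _).ne'
  have hs := (sigmaTau_pos W hτ).ne'
  rw [JTau, Matrix.smul_apply, smul_eq_mul, QTau_apply', ← sigmaTau]
  field_simp

end ForestMatrix
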